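/- For all L>0 and all R>0, E(L) ≤ e_gs(L;R)/R. -/

import Mathlib

open MeasureTheory Real Set Filter Topology

noncomputable section

/-- The open square `Q_r = (-r/2, r/2) × (-r/2, r/2)`. -/
def Qsq (r : ℝ) : Set (ℝ × ℝ) := Ioo (-r/2) (r/2) ×ˢ Ioo (-r/2) (r/2)

/-- The vertical strip `S_R = (-R/2, R/2) × ℝ`. -/
def Strip (R : ℝ) : Set (ℝ × ℝ) := Ioo (-R/2) (R/2) ×ˢ (univ : Set ℝ)

/-- The magnetic potential `A₀(x) = (-x₂/2, x₁/2)` of the constant unit magnetic field. -/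
def A₀ (x : ℝ × ℝ) : ℝ × ℝ := (-x.2 / 2, x.1 / 2)

/-- The magnetic potential `A_van(x) = (-x₂²/2, 0)` generating the field `B(x) = x₂`. -/
def Avan (x : ℝ × ℝ) : ℝ × ℝ := (-x.2 ^ 2 / 2, 0)

/-- The magnetic gradient energy density `|(∇ - iA)u|²` at `x`. -/
def magGradSq (A : ℝ × ℝ → ℝ × ℝ) (u : ℝ × ℝ → ℂ) (x : ℝ × ℝ) : ℝ :=
  ‖fderiv ℝ u x (1, 0) - Complex.I * ((A x).1 : ℂ) * u x‖ ^ 2 +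
  ‖fderiv ℝ u x (0, 1) - Complex.I * ((A x).2 : ℂ) * u x‖ ^ 2

/-- The Ginzburg–Landau functional `F_{b,Q_r}` on the square `Q_r`. -/
def Fsq (b r : ℝ) (u : ℝ × ℝ → ℂ) : ℝ :=
  ∫ x in Qsq r, (b * magGradSq A₀ u x - ‖u x‖ ^ 2 + ‖u x‖ ^ 4 / 2)

/-- (Smooth surrogate of) membership in `H¹(Q_r; ℂ)`. -/
def MemH1sq (u : ℝ × ℝ → ℂ) : Prop := ContDiff ℝ 1 u

/-- (Smooth surrogate of) membership in `H¹₀(Q_r; ℂ)`: vanishing on the boundary. -/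
def MemH10sq (r : ℝ) (u : ℝ × ℝ → ℂ) : Prop :=
  ContDiff ℝ 1 u ∧ ∀ x ∈ frontier (Qsq r), u x = 0

/-- The Dirichlet ground-state energy `e_D(b, r)`. -/
def eD (b r : ℝ) : ℝ := sInf (Fsq b r '' {u | MemH10sq r u})

/-- The Neumann ground-state energy `e_N(b, r)`. -/
def eN (b r : ℝ) : ℝ := sInf (Fsq b r '' {u | MemH1sq u})

/-- The energy density of the strip functional `𝓔_{L,R}` at `x`. -/
def stripDensity (L : ℝ) (u : ℝ × ℝ → ℂ) (x : ℝ × ℝ) : ℝ :=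
  magGradSq Avan u x - L ^ (-(2:ℝ)/3) * ‖u x‖ ^ 2 + (L ^ (-(2:ℝ)/3) / 2) * ‖u x‖ ^ 4

/-- The strip functional `𝓔_{L,R}`. -/
def Estrip (L R : ℝ) (u : ℝ × ℝ → ℂ) : ℝ := ∫ x in Strip R, stripDensity L u x

/-- (Surrogate of) membership in the space `H¹_{mag,0}(S_R)`. -/
def MemH1mag0 (R : ℝ) (u : ℝ × ℝ → ℂ) : Prop :=
  ContDiff ℝ 1 u ∧
  IntegrableOn (fun x => ‖u x‖ ^ 2) (Strip R) ∧
  IntegrableOn (magGradSq Avan u) (Strip R) ∧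
  IntegrableOn (fun x => ‖u x‖ ^ 4) (Strip R) ∧
  ∀ x ∈ frontier (Strip R), u x = 0

/-- The ground-state energy `e_gs(L; R)` of the strip functional. -/
def egs (L R : ℝ) : ℝ := sInf (Estrip L R '' {u | MemH1mag0 R u})

/-- `g : (0,∞) → ℝ` is the thermodynamic limit of the Dirichlet square energies. -/
def IsLimitG (g : ℝ → ℝ) : Prop :=
  ∀ b > 0, Tendsto (fun r => eD b r / r ^ 2) atTop (nhds (g b))

/-- `E : (0,∞) → ℝ` is the large-`R` limit of the strip energies. -/
def IsLimitE (E : ℝ → ℝ) : Prop :=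
  ∀ L > 0, Tendsto (fun R => egs L R / R) atTop (nhds (E L))


lemma ibp {f g : ℝ × ℝ → ℝ} (hf : ContDiff ℝ 1 f) (hg : ContDiff ℝ 1 g)
    (hgs : HasCompactSupport g) (v : ℝ × ℝ) :
    ∫ x, f x * fderiv ℝ g x v = - ∫ x, fderiv ℝ f x v * g x := by
  have hf' : Continuous (fun x => fderiv ℝ f x v) :=
    (hf.continuous_fderiv (by simp)).clm_apply continuous_const
  have hg' : Continuous (fun x => fderiv ℝ g x v) :=
    (hg.continuous_fderiv (by simp)).clm_apply continuous_const
  have hgs' : HasCompactSupport (fun x => fderiv ℝ g x v) := hgs.fderiv_apply ℝ v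
  apply integral_mul_fderiv_eq_neg_fderiv_mul_of_integrable
  · exact (hf'.mul hg.continuous).integrable_of_hasCompactSupport hgs.mul_left
  · exact (hf.continuous.mul hg').integrable_of_hasCompactSupport hgs'.mul_left
  · exact (hf.continuous.mul hg.continuous).integrable_of_hasCompactSupport hgs.mul_left
  · exact fun x _ => hf.differentiable (by simp) x
  · exact fun x _ => hg.differentiable (by simp) x

lemma integral_fderiv_zero {g : ℝ × ℝ → ℝ} (hg : ContDiff ℝ 1 g)
    (hgs : HasCompactSupport g) (v : ℝ × ℝ) : ∫ x, fderiv ℝ g x v = 0 := by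
  have := ibp (f := fun _ => 1) contDiff_const hg hgs v
  simpa using this

lemma mixed {f g : ℝ × ℝ → ℝ} (hf : ContDiff ℝ 1 f) (hg : ContDiff ℝ 1 g)
    (hfs : HasCompactSupport f) (hgs : HasCompactSupport g) (v w : ℝ × ℝ) :
    ∫ x, fderiv ℝ f x v * fderiv ℝ g x w = ∫ x, fderiv ℝ f x w * fderiv ℝ g x v := by
  have hf' : Continuous (fun x => fderiv ℝ f x w) :=
    (hf.continuous_fderiv (by simp)).clm_apply continuous_const
  have hg' : Continuous (fun x => fderiv ℝ g x w) :=
    (hg.continuous_fderiv (by simp)).clm_apply continuous_const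
  have hfs' : HasCompactSupport (fun x => fderiv ℝ f x w) := hfs.fderiv_apply ℝ w
  have hgs' : HasCompactSupport (fun x => fderiv ℝ g x w) := hgs.fderiv_apply ℝ w
  obtain ⟨C, hC⟩ := ContDiff.lipschitzWith_of_hasCompactSupport hfs hf (by simp)
  obtain ⟨D, hD⟩ := ContDiff.lipschitzWith_of_hasCompactSupport hgs hg (by simp)
  have A := hC.integral_inv_smul_sub_mul_tendsto_integral_lineDeriv_mul (μ := volume)
    (hg'.integrable_of_hasCompactSupport hgs') v
  have B := (hD.integral_inv_smul_sub_mul_tendsto_integral_lineDeriv_mul (μ := volume)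
    (hf'.integrable_of_hasCompactSupport hfs') (-v)).neg
  have key : ∀ t : ℝ, ∫ x, (t⁻¹ • (f (x + t • v) - f x)) * fderiv ℝ g x w =
      - ∫ x, (t⁻¹ • (g (x + t • (-v)) - g x)) * fderiv ℝ f x w := by
    intro t
    have hft : ContDiff ℝ 1 (fun x => f (x + t • v)) := hf.comp (contDiff_id.add contDiff_const)
    have e1 := ibp hft hg hgs w
    have e2 := ibp hf hg hgs w
    simp only [fderiv_comp_add_right] at e1
    have e3 : ∫ x, fderiv ℝ f (x + t • v) w * g x = ∫ x, fderiv ℝ f x w * g (x + t • (-v)) := by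
      rw [← integral_add_right_eq_self (fun x => fderiv ℝ f x w * g (x + t • (-v))) (t • v)]
      simp
    have hgt : Continuous (fun x => g (x + t • (-v))) :=
      hg.continuous.comp (continuous_id.add continuous_const)
    have i1 : Integrable (fun x => f (x + t • v) * fderiv ℝ g x w) :=
      (hft.continuous.mul hg').integrable_of_hasCompactSupport hgs'.mul_left
    have i2 : Integrable (fun x => f x * fderiv ℝ g x w) :=
      (hf.continuous.mul hg').integrable_of_hasCompactSupport hgs'.mul_left
    have i3 : Integrable (fun x => fderiv ℝ f x w * g (x + t • (-v))) :=
      (hf'.mul hgt).integrable_of_hasCompactSupport hfs'.mul_right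
    have i4 : Integrable (fun x => fderiv ℝ f x w * g x) :=
      (hf'.mul hg.continuous).integrable_of_hasCompactSupport hgs.mul_left
    calc _ = ∫ x, t⁻¹ * (f (x + t • v) * fderiv ℝ g x w - f x * fderiv ℝ g x w) := by
          congr 1; ext x; simp only [smul_eq_mul]; ring
      _ = t⁻¹ * (-(∫ x, fderiv ℝ f x w * g (x + t • (-v))) + ∫ x, fderiv ℝ f x w * g x) := by
          rw [integral_const_mul, integral_sub i1 i2, e1, e2, e3]; ring
      _ = - ∫ x, t⁻¹ * (fderiv ℝ f x w * g (x + t • (-v)) - fderiv ℝ f x w * g x) := by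
          rw [integral_const_mul, integral_sub i3 i4]; ring
      _ = _ := by
          congr 2; ext x; simp only [smul_eq_mul]; ring
  have := tendsto_nhds_unique (A.congr key) B
  simp only [(hf.differentiable (by simp)).differentiableAt.lineDeriv_eq_fderiv,
    (hg.differentiable (by simp)).differentiableAt.lineDeriv_eq_fderiv, map_neg, neg_mul,
    integral_neg, neg_neg] at this
  rw [this]
  congr 1; ext x; ring

/-- Key integral inequality for compactly supported real pairs. -/
lemma key_real {a b : ℝ × ℝ → ℝ} (ha : ContDiff ℝ 1 a) (hb : ContDiff ℝ 1 b)
    (has : HasCompactSupport a) (hbs : HasCompactSupport b) :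
    ∫ x : ℝ × ℝ, (x.2 * arctan x.2 * (a x ^ 2 + b x ^ 2) +
      2 * arctan x.2 * ((fderiv ℝ b x (1,0) + x.2 ^ 2 / 2 * a x) * fderiv ℝ a x (0,1)
        - (fderiv ℝ a x (1,0) - x.2 ^ 2 / 2 * b x) * fderiv ℝ b x (0,1)) +
      (1 / (1 + x.2 ^ 2)) * ((fderiv ℝ b x (1,0) + x.2 ^ 2 / 2 * a x) * a x
        - (fderiv ℝ a x (1,0) - x.2 ^ 2 / 2 * b x) * b x)) = 0 := by
  have hw : ContDiff ℝ 1 (fun x : ℝ × ℝ => arctan x.2) := Real.contDiff_arctan.comp contDiff_snd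
  have hA : ContDiff ℝ 1 (fun x : ℝ × ℝ => arctan x.2 * a x) := hw.mul ha
  have hB : ContDiff ℝ 1 (fun x : ℝ × ℝ => arctan x.2 * b x) := hw.mul hb
  have hAs : HasCompactSupport (fun x : ℝ × ℝ => arctan x.2 * a x) := has.mul_left
  have hBs : HasCompactSupport (fun x : ℝ × ℝ => arctan x.2 * b x) := hbs.mul_left
  have hF : ContDiff ℝ 1 (fun x : ℝ × ℝ => (arctan x.2 * x.2 ^ 2 / 2) * (a x ^ 2 + b x ^ 2)) :=
    ((hw.mul (contDiff_snd.pow 2)).div_const 2).mul ((ha.pow 2).add (hb.pow 2))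
  have hFs : HasCompactSupport
      (fun x : ℝ × ℝ => (arctan x.2 * x.2 ^ 2 / 2) * (a x ^ 2 + b x ^ 2)) := by
    apply HasCompactSupport.mul_left
    apply HasCompactSupport.add
    · exact has.comp_left (g := fun y => y ^ 2) (by simp)
    · exact hbs.comp_left (g := fun y => y ^ 2) (by simp)
  have m1 := mixed hb hA hbs hAs (1,0) (0,1)
  have m2 := mixed ha hB has hBs (1,0) (0,1)
  have m3 := integral_fderiv_zero hF hFs (0,1)
  have c : ∀ {f : ℝ × ℝ → ℝ}, ContDiff ℝ 1 f → ∀ v, Continuous (fun x => fderiv ℝ f x v) :=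
    fun hf v => (hf.continuous_fderiv (by simp)).clm_apply continuous_const
  have i : ∀ {f g : ℝ × ℝ → ℝ}, ContDiff ℝ 1 f → ContDiff ℝ 1 g → HasCompactSupport f → ∀ v w,
      Integrable (fun x => fderiv ℝ f x v * fderiv ℝ g x w) := fun hf hg hfs v w =>
    ((c hf v).mul (c hg w)).integrable_of_hasCompactSupport (hfs.fderiv_apply ℝ v).mul_right
  have i3 : Integrable (fun x => fderiv ℝ
      (fun x : ℝ × ℝ => (arctan x.2 * x.2 ^ 2 / 2) * (a x ^ 2 + b x ^ 2)) x (0,1)) :=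
    (c hF _).integrable_of_hasCompactSupport (hFs.fderiv_apply ℝ _)
  have total : ∫ x, ((fderiv ℝ b x (1,0) * fderiv ℝ (fun x : ℝ × ℝ => arctan x.2 * a x) x (0,1)
      - fderiv ℝ b x (0,1) * fderiv ℝ (fun x : ℝ × ℝ => arctan x.2 * a x) x (1,0))
      - (fderiv ℝ a x (1,0) * fderiv ℝ (fun x : ℝ × ℝ => arctan x.2 * b x) x (0,1)
      - fderiv ℝ a x (0,1) * fderiv ℝ (fun x : ℝ × ℝ => arctan x.2 * b x) x (1,0))
      + fderiv ℝ
      (fun x : ℝ × ℝ => (arctan x.2 * x.2 ^ 2 / 2) * (a x ^ 2 + b x ^ 2)) x (0,1)) = 0 := by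
    have j1 := i hb hA hbs (1,0) (0,1)
    have j2 := i hb hA hbs (0,1) (1,0)
    have j3 := i ha hB has (1,0) (0,1)
    have j4 := i ha hB has (0,1) (1,0)
    have k1 := integral_add ((j1.sub j2).sub (j3.sub j4)) i3
    have k2 := integral_sub (j1.sub j2) (j3.sub j4)
    have k3 := integral_sub j1 j2
    have k4 := integral_sub j3 j4
    simp only [Pi.sub_apply] at k1 k2
    linarith
  refine Eq.trans ?_ total
  congr 1; ext x
  have dw : HasFDerivAt (fun x : ℝ × ℝ => arctan x.2)
      ((1 / (1 + x.2 ^ 2)) • ContinuousLinearMap.snd ℝ ℝ ℝ) x :=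
    (Real.hasDerivAt_arctan x.2).comp_hasFDerivAt x hasFDerivAt_snd
  have da := (ha.differentiable (by simp) x).hasFDerivAt
  have db := (hb.differentiable (by simp) x).hasFDerivAt
  have ds : HasFDerivAt (fun x : ℝ × ℝ => x.2) (ContinuousLinearMap.snd ℝ ℝ ℝ) x := hasFDerivAt_snd
  have dA := (dw.mul da).fderiv
  have dB := (dw.mul db).fderiv
  have dF := ((dw.mul ((ds.mul ds).mul_const (1/2))).mul ((da.mul da).add (db.mul db))).fderiv
  have eF : (fun x : ℝ × ℝ => (arctan x.2 * x.2 ^ 2 / 2) * (a x ^ 2 + b x ^ 2)) =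
      (fun x : ℝ × ℝ => (arctan x.2 * (x.2 * x.2 * (1/2))) * (a x * a x + b x * b x)) := by
    ext x; ring
  rw [eF]
  simp only [Pi.mul_def, Pi.add_def] at dA dB dF
  rw [dA, dB, dF]
  simp
  ring

lemma arctan_abs_le (t : ℝ) : |arctan t| ≤ 2 := by
  rw [abs_le]
  have := Real.arctan_lt_pi_div_two t
  have := Real.neg_pi_div_two_lt_arctan t
  have := Real.pi_lt_four
  constructor <;> linarith

lemma mul_arctan_of_one_le {t : ℝ} (ht : 1 ≤ |t|) : |t| / 2 ≤ t * arctan t := by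
  have h3 := Real.pi_gt_three
  have key : ∀ s : ℝ, 1 ≤ s → s / 2 ≤ s * arctan s := by
    intro s hs
    have h := Real.arctan_mono hs
    rw [Real.arctan_one] at h
    nlinarith
  rcases le_total 0 t with h | h
  · rw [abs_of_nonneg h] at *; exact key t ht
  · rw [abs_of_nonpos h] at *
    have := key _ ht
    rw [Real.arctan_neg] at this
    linarith

lemma mul_arctan_nonneg (t : ℝ) : 0 ≤ t * arctan t := by
  rcases le_total 0 t with h | h
  · exact mul_nonneg h (Real.arctan_nonneg.2 h)
  · have := Real.arctan_mono h
    rw [Real.arctan_zero] at this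
    exact mul_nonneg_of_nonpos_of_nonpos h this

lemma alg_key (l t X Y Z W p q : ℝ) :
    (t * arctan t - 1) / 3 * (p ^ 2 + q ^ 2) - l * (p ^ 2 + q ^ 2)
      + l / 2 * (p ^ 2 + q ^ 2) ^ 2 ≤ X ^ 2 + Y ^ 2 + Z ^ 2 + W ^ 2 - l * (p ^ 2 + q ^ 2)
      + l / 2 * (p ^ 2 + q ^ 2) ^ 2 +
      (t * arctan t * (p ^ 2 + q ^ 2) + 2 * arctan t * (Y * Z - X * W) +
      (1 / (1 + t ^ 2)) * (Y * p - X * q)) / 3 := by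
  have hs0 : 0 ≤ p ^ 2 + q ^ 2 := by positivity
  have b1 : |2 * arctan t * (Y * Z - X * W)| ≤ 2 * (X ^ 2 + Y ^ 2 + Z ^ 2 + W ^ 2) := by
    rw [abs_mul, abs_mul, abs_two]
    have u1 := arctan_abs_le t
    have u2 : |Y * Z - X * W| ≤ (X ^ 2 + Y ^ 2 + Z ^ 2 + W ^ 2) / 2 := by
      rw [abs_le]; constructor <;> nlinarith [sq_nonneg (Y - Z), sq_nonneg (X - W),
        sq_nonneg (Y + Z), sq_nonneg (X + W)]
    have := mul_le_mul u1 u2 (abs_nonneg _) (by norm_num)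
    linarith
  have b2 : |1 / (1 + t ^ 2) * (Y * p - X * q)| ≤ (X ^ 2 + Y ^ 2 + (p ^ 2 + q ^ 2)) / 2 := by
    rw [abs_mul]
    have u1 : |1 / (1 + t ^ 2)| ≤ 1 := by
      rw [abs_of_nonneg (by positivity), div_le_one (by positivity)]
      nlinarith [sq_nonneg t]
    have u2 : |Y * p - X * q| ≤ (X ^ 2 + Y ^ 2 + (p ^ 2 + q ^ 2)) / 2 := by
      rw [abs_le]; constructor <;> nlinarith [sq_nonneg (Y - p), sq_nonneg (X - q),
        sq_nonneg (Y + p), sq_nonneg (X + q)]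
    have := mul_le_mul u1 u2 (abs_nonneg _) (by norm_num)
    linarith
  have := (abs_le.1 b1).1
  have := (abs_le.1 b2).1
  have := sq_nonneg X
  have := sq_nonneg Y
  have := sq_nonneg Z
  have := sq_nonneg W
  linarith

/-- Compactly supported `C¹` functions in the strip `(a,b) × ℝ`. -/
def Good (a b : ℝ) (v : ℝ × ℝ → ℂ) : Prop :=
  ContDiff ℝ 1 v ∧ HasCompactSupport v ∧ tsupport v ⊆ Ioo a b ×ˢ univ

/-- Energy over the whole plane. -/
def Jfull (L : ℝ) (v : ℝ × ℝ → ℂ) : ℝ := ∫ x, stripDensity L v x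

lemma continuous_Avan1 : Continuous (fun x => (((Avan x).1 : ℝ) : ℂ)) := by
  unfold Avan; fun_prop

lemma continuous_magGradSq {v : ℝ × ℝ → ℂ} (hv : ContDiff ℝ 1 v) :
    Continuous (magGradSq Avan v) := by
  have c : ∀ e, Continuous (fun x => fderiv ℝ v x e) :=
    fun e => (hv.continuous_fderiv (by simp)).clm_apply continuous_const
  have c1 := c (1,0)
  have c2 := c (0,1)
  have hc := hv.continuous
  have := continuous_Avan1
  unfold magGradSq
  have h2 : ∀ x, (Avan x).2 = 0 := fun x => rfl
  simp only [h2]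
  fun_prop

lemma continuous_stripDensity (L : ℝ) {v : ℝ × ℝ → ℂ} (hv : ContDiff ℝ 1 v) :
    Continuous (stripDensity L v) := by
  have h1 := continuous_magGradSq hv
  have h2 := hv.continuous
  unfold stripDensity
  fun_prop

lemma stripDensity_congr (L : ℝ) {v w : ℝ × ℝ → ℂ} {x : ℝ × ℝ} (h : v =ᶠ[𝓝 x] w) :
    stripDensity L v x = stripDensity L w x := by
  unfold stripDensity magGradSq
  rw [h.fderiv_eq, h.eq_of_nhds]

lemma magGradSq_congr {v w : ℝ × ℝ → ℂ} {x : ℝ × ℝ} (h : v =ᶠ[𝓝 x] w) :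
    magGradSq Avan v x = magGradSq Avan w x := by
  unfold magGradSq
  rw [h.fderiv_eq, h.eq_of_nhds]

lemma stripDensity_zero (L : ℝ) (x : ℝ × ℝ) : stripDensity L (fun _ => 0) x = 0 := by
  simp [stripDensity, magGradSq]

lemma stripDensity_of_notMem (L : ℝ) {v : ℝ × ℝ → ℂ} {x : ℝ × ℝ} (h : x ∉ tsupport v) :
    stripDensity L v x = 0 := by
  rw [← stripDensity_zero L x]
  exact stripDensity_congr L (notMem_tsupport_iff_eventuallyEq.1 h)

lemma magGradSq_of_notMem {v : ℝ × ℝ → ℂ} {x : ℝ × ℝ} (h : x ∉ tsupport v) :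
    magGradSq Avan v x = 0 := by
  have : magGradSq Avan (fun _ => 0) x = 0 := by simp [magGradSq]
  rw [← this]
  exact magGradSq_congr (notMem_tsupport_iff_eventuallyEq.1 h)

lemma Good.integrable {a b : ℝ} {v : ℝ × ℝ → ℂ} (h : Good a b v) (L : ℝ) :
    Integrable (stripDensity L v) :=
  (continuous_stripDensity L h.1).integrable_of_hasCompactSupport
    (HasCompactSupport.intro h.2.1 fun _ hx => stripDensity_of_notMem L hx)

lemma Good.mem {R : ℝ} {v : ℝ × ℝ → ℂ} (h : Good (-R/2) (R/2) v) : MemH1mag0 R v := by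
  obtain ⟨h1, h2, h3⟩ := h
  have z : ∀ x, x ∉ tsupport v → v x = 0 := fun x hx => image_eq_zero_of_notMem_tsupport hx
  have hc := h1.continuous
  refine ⟨h1, ?_, ?_, ?_, ?_⟩
  · refine (Continuous.integrable_of_hasCompactSupport (by fun_prop)
      (HasCompactSupport.intro h2 fun x hx => ?_)).integrableOn
    simp [z x hx]
  · exact ((continuous_magGradSq h1).integrable_of_hasCompactSupport
      (HasCompactSupport.intro h2 fun x hx => magGradSq_of_notMem hx)).integrableOn
  · refine (Continuous.integrable_of_hasCompactSupport (by fun_prop)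
      (HasCompactSupport.intro h2 fun x hx => ?_)).integrableOn
    simp [z x hx]
  · intro x hx
    apply z
    intro hx'
    have ho : IsOpen (Strip R) := isOpen_Ioo.prod isOpen_univ
    rw [ho.frontier_eq] at hx
    exact hx.2 (h3 hx')

lemma Good.Estrip_eq {R : ℝ} {v : ℝ × ℝ → ℂ} (h : Good (-R/2) (R/2) v) (L : ℝ) :
    Estrip L R v = Jfull L v := by
  unfold Estrip Jfull
  apply setIntegral_eq_integral_of_forall_compl_eq_zero
  intro x hx
  exact stripDensity_of_notMem L fun h' => hx (h.2.2 h')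

set_option maxHeartbeats 1000000 in
lemma lower_bound {L : ℝ} (hL : 0 < L) (a b : ℝ) :
    ∃ C : ℝ, ∀ v, Good a b v → C ≤ Jfull L v := by
  set l := L ^ (-(2:ℝ)/3) with hl
  have lpos : 0 < l := Real.rpow_pos_of_pos hL _
  set M := 2 * (1 + 3 * l) with hM
  set c := (1/3 + l) ^ 2 / (2 * l) with hc
  set K : Set (ℝ × ℝ) := Icc a b ×ˢ Icc (-M) M with hK
  have Kc : IsCompact K := isCompact_Icc.prod isCompact_Icc
  have cn : 0 ≤ c := by positivity
  refine ⟨∫ x, K.indicator (fun _ => -c) x, fun v hv => ?_⟩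
  have ig : Integrable (K.indicator (fun _ => -c)) :=
    (integrable_indicator_iff Kc.measurableSet).2
      (integrableOn_const (hs := Kc.measure_lt_top.ne))
  obtain ⟨h1, h2, h3⟩ := id hv
  have fre : ∀ x e, fderiv ℝ (fun x => (v x).re) x e = (fderiv ℝ v x e).re := by
    intro x e
    have := Complex.reCLM.hasFDerivAt.comp x (h1.differentiable (by simp) x).hasFDerivAt
    have h := this.fderiv
    simp only [Function.comp_def, Complex.reCLM_apply] at h
    rw [h]; simp
  have fim : ∀ x e, fderiv ℝ (fun x => (v x).im) x e = (fderiv ℝ v x e).im := by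
    intro x e
    have := Complex.imCLM.hasFDerivAt.comp x (h1.differentiable (by simp) x).hasFDerivAt
    have h := this.fderiv
    simp only [Function.comp_def, Complex.imCLM_apply] at h
    rw [h]; simp
  have ha : ContDiff ℝ 1 (fun x => (v x).re) := Complex.reCLM.contDiff.comp h1
  have hb : ContDiff ℝ 1 (fun x => (v x).im) := Complex.imCLM.contDiff.comp h1
  have has : HasCompactSupport (fun x => (v x).re) := h2.comp_left (g := Complex.re) (by simp)
  have hbs : HasCompactSupport (fun x => (v x).im) := h2.comp_left (g := Complex.im) (by simp)
  have kr := key_real ha hb has hbs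
  simp only [fre, fim] at kr
  set I : ℝ × ℝ → ℝ := fun x => x.2 * arctan x.2 * ((v x).re ^ 2 + (v x).im ^ 2) +
      2 * arctan x.2 * (((fderiv ℝ v x (1,0)).im + x.2 ^ 2 / 2 * (v x).re) * (fderiv ℝ v x (0,1)).re
        - ((fderiv ℝ v x (1,0)).re - x.2 ^ 2 / 2 * (v x).im) * (fderiv ℝ v x (0,1)).im) +
      (1 / (1 + x.2 ^ 2)) * (((fderiv ℝ v x (1,0)).im + x.2 ^ 2 / 2 * (v x).re) * (v x).re
        - ((fderiv ℝ v x (1,0)).re - x.2 ^ 2 / 2 * (v x).im) * (v x).im) with hI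
  have iI : Integrable I := by
    apply Continuous.integrable_of_hasCompactSupport
    · have c : ∀ e, Continuous (fun x => fderiv ℝ v x e) :=
        fun e => (h1.continuous_fderiv (by simp)).clm_apply continuous_const
      have c1 := Complex.continuous_re.comp (c (1,0))
      have c2 := Complex.continuous_re.comp (c (0,1))
      have c3 := Complex.continuous_im.comp (c (1,0))
      have c4 := Complex.continuous_im.comp (c (0,1))
      have c5 := Complex.continuous_re.comp h1.continuous
      have c6 := Complex.continuous_im.comp h1.continuous
      simp only [Function.comp_def] at c1 c2 c3 c4 c5 c6
      have c7 : Continuous (fun x : ℝ × ℝ => 1 / (1 + x.2 ^ 2)) :=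
        Continuous.div (by fun_prop) (by fun_prop) (fun x => by positivity)
      have c8 : Continuous (fun x : ℝ × ℝ => arctan x.2) :=
        Real.continuous_arctan.comp continuous_snd
      fun_prop
    · refine HasCompactSupport.intro h2 fun x hx => ?_
      have e := notMem_tsupport_iff_eventuallyEq.1 hx
      have e1 := e.fderiv_eq (𝕜 := ℝ)
      have e2 := e.eq_of_nhds
      simp [hI, e1, e2]
  have iD := hv.integrable L
  have hJ : Jfull L v = ∫ x, (stripDensity L v x + I x / 3) := by
    rw [integral_add iD (iI.div_const 3), integral_div, kr]
    simp [Jfull]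
  rw [hJ]
  refine integral_mono ig (iD.add (iI.div_const 3)) fun x => ?_
  have hz : x.1 ∉ Icc a b → v x = 0 := by
    intro hx
    apply image_eq_zero_of_notMem_tsupport
    intro hx'
    exact hx (Ioo_subset_Icc_self (h3 hx').1)
  set X := (fderiv ℝ v x (1,0)).re - x.2 ^ 2 / 2 * (v x).im with hX
  set Y := (fderiv ℝ v x (1,0)).im + x.2 ^ 2 / 2 * (v x).re with hY
  set Z := (fderiv ℝ v x (0,1)).re with hZ
  set W := (fderiv ℝ v x (0,1)).im with hW
  set p := (v x).re with hp
  set q := (v x).im with hq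
  have nsq : ∀ z : ℂ, ‖z‖ ^ 2 = z.re ^ 2 + z.im ^ 2 := by
    intro z; rw [← Complex.normSq_eq_norm_sq, Complex.normSq_apply]; ring
  have hden : stripDensity L v x = X ^ 2 + Y ^ 2 + Z ^ 2 + W ^ 2 - l * (p ^ 2 + q ^ 2)
      + l / 2 * (p ^ 2 + q ^ 2) ^ 2 := by
    have e4 : ‖v x‖ ^ 4 = (‖v x‖ ^ 2) ^ 2 := by ring
    simp only [stripDensity, magGradSq]
    rw [e4, nsq, nsq, nsq]
    simp only [Avan, hX, hY, hZ, hW, hp, hq, hl, Complex.sub_re, Complex.sub_im, Complex.mul_re,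
      Complex.mul_im, Complex.I_re, Complex.I_im, Complex.ofReal_re, Complex.ofReal_im]
    ring
  have hIx : I x = x.2 * arctan x.2 * (p ^ 2 + q ^ 2) + 2 * arctan x.2 * (Y * Z - X * W) +
      (1 / (1 + x.2 ^ 2)) * (Y * p - X * q) := rfl
  have hs0 : 0 ≤ p ^ 2 + q ^ 2 := by positivity
  have key : (x.2 * arctan x.2 - 1) / 3 * (p ^ 2 + q ^ 2) - l * (p ^ 2 + q ^ 2)
      + l / 2 * (p ^ 2 + q ^ 2) ^ 2 ≤ stripDensity L v x + I x / 3 := by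
    rw [hden, hIx]
    exact alg_key l x.2 X Y Z W p q
  clear_value X Y Z W I
  refine le_trans ?_ key
  have hquad : 0 ≤ l / 2 * (p ^ 2 + q ^ 2) ^ 2 := by positivity
  by_cases hxK : x ∈ K
  · rw [indicator_of_mem hxK]
    have h0 := mul_nonneg (mul_arctan_nonneg x.2) hs0
    have hcl : c * (2 * l) = (1/3 + l) ^ 2 := by rw [hc]; field_simp
    have : 0 ≤ c - (1/3 + l) * (p ^ 2 + q ^ 2) + l / 2 * (p ^ 2 + q ^ 2) ^ 2 := by
      have h5 : 0 ≤ (2 * l) * (c - (1/3 + l) * (p ^ 2 + q ^ 2) + l / 2 * (p ^ 2 + q ^ 2) ^ 2) := by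
        nlinarith [sq_nonneg (1/3 + l - l * (p ^ 2 + q ^ 2))]
      exact nonneg_of_mul_nonneg_right h5 (by positivity)
    linarith
  · rw [indicator_of_notMem hxK]
    by_cases hx1 : x.1 ∈ Icc a b
    · have hx2 : M < |x.2| := by
        by_contra hcon
        exact hxK ⟨hx1, abs_le.1 (not_lt.1 hcon)⟩
      have := mul_arctan_of_one_le (t := x.2) (by linarith)
      have h6 : 0 ≤ ((x.2 * arctan x.2 - 1) / 3 - l) * (p ^ 2 + q ^ 2) :=
        mul_nonneg (by linarith) hs0
      linarith
    · have := hz hx1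
      simp [hp, hq, this]

lemma Good.translate {a b : ℝ} {v : ℝ × ℝ → ℂ} (h : Good a b v) (c L : ℝ) :
    Good (a + c) (b + c) (fun x => v (x - (c, 0))) ∧
      Jfull L (fun x => v (x - (c, 0))) = Jfull L v := by
  obtain ⟨h1, h2, h3⟩ := h
  refine ⟨⟨h1.comp (contDiff_id.sub contDiff_const), ?_, ?_⟩, ?_⟩
  · exact h2.comp_homeomorph (Homeomorph.subRight ((c, 0) : ℝ × ℝ))
  · have := tsupport_comp_eq_preimage v (Homeomorph.subRight ((c, 0) : ℝ × ℝ))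
    intro x hx
    have hx' : x ∈ tsupport (v ∘ (Homeomorph.subRight ((c, 0) : ℝ × ℝ))) := hx
    rw [this] at hx'
    have h4 := (h3 hx').1
    simp only [Homeomorph.coe_subRight, Prod.fst_sub, mem_Ioo] at h4
    exact ⟨⟨by linarith [h4.1], by linarith [h4.2]⟩, mem_univ _⟩
  · have : ∀ x, stripDensity L (fun x => v (x - (c, 0))) x = stripDensity L v (x - (c, 0)) := by
      intro x
      simp only [stripDensity, magGradSq, fderiv_comp_sub, Avan, Prod.snd_sub, sub_zero]
    unfold Jfull
    simp only [this]
    exact integral_sub_right_eq_self (fun x => stripDensity L v x) ((c, 0) : ℝ × ℝ)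

lemma Good.add {a b c : ℝ} {v w : ℝ × ℝ → ℂ} (hab : a ≤ b) (hbc : b ≤ c)
    (hv : Good a b v) (hw : Good b c w) (L : ℝ) :
    Good a c (fun x => v x + w x) ∧ Jfull L (fun x => v x + w x) = Jfull L v + Jfull L w := by
  refine ⟨⟨hv.1.add hw.1, hv.2.1.add hw.2.1, ?_⟩, ?_⟩
  · refine (tsupport_add v w).trans (union_subset ?_ ?_)
    · exact hv.2.2.trans (prod_mono (Ioo_subset_Ioo le_rfl hbc) le_rfl)
    · exact hw.2.2.trans (prod_mono (Ioo_subset_Ioo hab le_rfl) le_rfl)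
  · unfold Jfull
    rw [← integral_add (hv.integrable L) (hw.integrable L)]
    congr 1; ext x
    by_cases hx : x ∈ tsupport v
    · have hx' : x ∉ tsupport w := fun h' =>
        absurd ((hv.2.2 hx).1.2) (not_lt.2 (hw.2.2 h').1.1.le)
      rw [stripDensity_of_notMem L hx', add_zero]
      apply stripDensity_congr
      filter_upwards [notMem_tsupport_iff_eventuallyEq.1 hx'] with y hy
      simp [hy]
    · rw [stripDensity_of_notMem L hx, zero_add]
      apply stripDensity_congr
      filter_upwards [notMem_tsupport_iff_eventuallyEq.1 hx] with y hy
      simp [hy]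

lemma glue {a r L : ℝ} (hr : 0 < r) {v : ℝ × ℝ → ℂ} (hv : Good a (a + r) v) (n : ℕ) :
    ∃ w, Good a (a + n * r) w ∧ Jfull L w = n * Jfull L v := by
  induction n with
  | zero =>
    refine ⟨fun _ => 0, ⟨contDiff_const, HasCompactSupport.zero, ?_⟩, ?_⟩
    · have : tsupport (fun _ : ℝ × ℝ => (0:ℂ)) = ∅ := by
        rw [tsupport_eq_empty_iff]; rfl
      rw [this]; exact empty_subset _
    · simp [Jfull, stripDensity_zero]
  | succ n ih =>
    obtain ⟨w, hw, hJ⟩ := ih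
    obtain ⟨t1, t2⟩ := hv.translate (n * r) L
    have t1' : Good (a + n * r) (a + (n + 1 : ℕ) * r) (fun x => v (x - (n * r, 0))) := by
      convert t1 using 1; push_cast; ring
    have hn : 0 ≤ (n : ℝ) * r := by positivity
    obtain ⟨g1, g2⟩ := hw.add (by linarith) (by push_cast; linarith) t1' L
    exact ⟨_, g1, by rw [g2, hJ, t2]; push_cast; ring⟩

lemma magGradSq_smul_le {u : ℝ × ℝ → ℂ} {φ : ℝ × ℝ → ℝ} {C : ℝ} {x : ℝ × ℝ}
    (hu : DifferentiableAt ℝ u x) (hφ : DifferentiableAt ℝ φ x)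
    (h1 : |φ x| ≤ 1) (hC : ‖fderiv ℝ φ x‖ ≤ C) :
    magGradSq Avan (fun y => φ y • u y) x ≤ 2 * magGradSq Avan u x + 4 * C ^ 2 * ‖u x‖ ^ 2 := by
  have hd := (hφ.hasFDerivAt.smul hu.hasFDerivAt).fderiv
  have hd' : fderiv ℝ (fun y => φ y • u y) x = _ := hd
  have C0 : 0 ≤ C := (norm_nonneg _).trans hC
  have main : ∀ (e : ℝ × ℝ) (α : ℂ), ‖e‖ ≤ 1 →
      ‖fderiv ℝ (fun y => φ y • u y) x e - Complex.I * α * (φ x • u x)‖ ^ 2 ≤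
      2 * ‖fderiv ℝ u x e - Complex.I * α * u x‖ ^ 2 + 2 * C ^ 2 * ‖u x‖ ^ 2 := by
    intro e α he
    have e1 : fderiv ℝ (fun y => φ y • u y) x e - Complex.I * α * (φ x • u x) =
        φ x • (fderiv ℝ u x e - Complex.I * α * u x) + (fderiv ℝ φ x e) • u x := by
      rw [hd']
      simp [Complex.real_smul]
      ring
    have n1 : ‖fderiv ℝ (fun y => φ y • u y) x e - Complex.I * α * (φ x • u x)‖ ≤
        ‖fderiv ℝ u x e - Complex.I * α * u x‖ + C * ‖u x‖ := by
      rw [e1]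
      refine (norm_add_le _ _).trans (add_le_add ?_ ?_)
      · rw [norm_smul, Real.norm_eq_abs]
        exact mul_le_of_le_one_left (norm_nonneg _) h1
      · rw [norm_smul]
        refine mul_le_mul_of_nonneg_right ?_ (norm_nonneg _)
        calc _ ≤ ‖fderiv ℝ φ x‖ * ‖e‖ := ContinuousLinearMap.le_opNorm _ _
          _ ≤ C * 1 := mul_le_mul hC he (norm_nonneg _) C0
          _ = C := mul_one C
    have := pow_le_pow_left₀ (norm_nonneg _) n1 2
    nlinarith [sq_nonneg (‖fderiv ℝ u x e - Complex.I * α * u x‖ - C * ‖u x‖)]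
  have m1 := main (1,0) ((Avan x).1 : ℂ) (by simp [Prod.norm_def])
  have m2 := main (0,1) ((Avan x).2 : ℂ) (by simp [Prod.norm_def])
  unfold magGradSq
  linarith

lemma isOpen_Strip (R : ℝ) : IsOpen (Strip R) := isOpen_Ioo.prod isOpen_univ

/-- The profile `χ` used for the cutoff in the second variable. -/
lemma exists_cutoff : ∃ (χ : ℝ → ℝ) (C : NNReal), ContDiff ℝ 1 χ ∧ LipschitzWith C χ ∧
    (∀ t, |χ t| ≤ 1) ∧ (∀ t, |t| ≤ 1 → χ t = 1) ∧ (∀ t, 2 ≤ |t| → χ t = 0) := by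
  have h0 : ∀ t : ℝ, 2 ≤ |t| → smoothTransition (2 - t ^ 2) = 0 := by
    intro t ht
    apply smoothTransition.zero_of_nonpos
    rw [← sq_abs]; nlinarith
  have hd : ContDiff ℝ 1 (fun t : ℝ => smoothTransition (2 - t ^ 2)) :=
    smoothTransition.contDiff.comp (contDiff_const.sub (contDiff_id.pow 2))
  have hs : HasCompactSupport (fun t : ℝ => smoothTransition (2 - t ^ 2)) := by
    refine HasCompactSupport.intro (isCompact_Icc (a := -2) (b := 2)) fun t ht => h0 t ?_
    by_contra hcon
    exact ht (abs_le.1 (not_le.1 hcon).le)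
  obtain ⟨C, hC⟩ := ContDiff.lipschitzWith_of_hasCompactSupport hs hd (by simp)
  refine ⟨_, C, hd, hC, fun t => ?_, fun t ht => ?_, h0⟩
  · rw [abs_of_nonneg (smoothTransition.nonneg _)]; exact smoothTransition.le_one _
  · apply smoothTransition.one_of_one_le
    have := (sq_le_one_iff_abs_le_one t).2 ht
    linarith

lemma approx1 {L R : ℝ} {u : ℝ × ℝ → ℂ} (hL : 0 < L) (hu : MemH1mag0 R u) {ε : ℝ} (hε : 0 < ε) :
    ∃ (u' : ℝ × ℝ → ℂ) (T : ℝ), ContDiff ℝ 1 u' ∧ (∀ x ∈ frontier (Strip R), u' x = 0) ∧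
      (∀ x, T ≤ |x.2| → u' x = 0) ∧ Estrip L R u' ≤ Estrip L R u + ε := by
  obtain ⟨χ, C, hd, hC, hb, h1, h0⟩ := exists_cutoff
  obtain ⟨u1, u2, u3, u4, u5⟩ := hu
  have lpos : 0 < L ^ (-(2:ℝ)/3) := Real.rpow_pos_of_pos hL _
  let c : ℕ → ℝ := fun n => 1 / ((n:ℝ) + 1)
  have cpos : ∀ n, 0 < c n := fun n => by positivity
  have cle : ∀ n, c n ≤ 1 := fun n => by
    rw [div_le_one (by positivity)]; have : (0:ℝ) ≤ n := by positivity
    linarith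
  let φ : ℕ → ℝ × ℝ → ℝ := fun n x => χ (c n * x.2)
  have hφ : ∀ n, ContDiff ℝ 1 (φ n) := fun n => hd.comp (contDiff_const.mul contDiff_snd)
  have hφl : ∀ n, LipschitzWith C (φ n) := by
    intro n
    refine LipschitzWith.of_dist_le_mul fun x y => ?_
    refine (hC.dist_le_mul _ _).trans ?_
    refine mul_le_mul_of_nonneg_left ?_ C.2
    rw [Real.dist_eq, ← mul_sub, abs_mul, abs_of_pos (cpos n), ← Real.dist_eq]
    calc c n * dist x.2 y.2 ≤ 1 * dist x.2 y.2 := mul_le_mul_of_nonneg_right (cle n) dist_nonneg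
      _ ≤ dist x y := by rw [one_mul, Prod.dist_eq]; exact le_max_right _ _
  let w : ℕ → ℝ × ℝ → ℂ := fun n x => φ n x • u x
  have hw : ∀ n, ContDiff ℝ 1 (w n) := fun n => (hφ n).smul u1
  have hnw : ∀ n x, ‖w n x‖ ≤ ‖u x‖ := by
    intro n x
    simp only [w, norm_smul, Real.norm_eq_abs]
    exact mul_le_of_le_one_left (norm_nonneg _) (hb _)
  have lim : Tendsto (fun n => Estrip L R (w n)) atTop (𝓝 (Estrip L R u)) := by
    refine tendsto_integral_of_dominated_convergence
      (fun x => 2 * magGradSq Avan u x + 4 * (C:ℝ) ^ 2 * ‖u x‖ ^ 2 +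
        L ^ (-(2:ℝ)/3) * ‖u x‖ ^ 2 + L ^ (-(2:ℝ)/3) / 2 * ‖u x‖ ^ 4) ?_ ?_ ?_ ?_
    · exact fun n => (continuous_stripDensity L (hw n)).aestronglyMeasurable
    · exact (((u3.const_mul 2).add (u2.const_mul _)).add (u2.const_mul _)).add (u4.const_mul _)
    · intro n
      refine Eventually.of_forall fun x => ?_
      have m := magGradSq_smul_le (u1.differentiable (by simp) x)
        ((hφ n).differentiable (by simp) x) (hb _) (norm_fderiv_le_of_lipschitz ℝ (hφl n) (x₀ := x))
      have m0 : 0 ≤ magGradSq Avan (w n) x := by unfold magGradSq; positivity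
      have p2 := mul_le_mul_of_nonneg_left
        (pow_le_pow_left₀ (norm_nonneg _) (hnw n x) 2) lpos.le
      have p4 := mul_le_mul_of_nonneg_left
        (pow_le_pow_left₀ (norm_nonneg _) (hnw n x) 4) (half_pos lpos).le
      have q2 : 0 ≤ L ^ (-(2:ℝ)/3) * ‖w n x‖ ^ 2 := by positivity
      have q4 : 0 ≤ L ^ (-(2:ℝ)/3) / 2 * ‖w n x‖ ^ 4 := by positivity
      have m' : magGradSq Avan (w n) x ≤ 2 * magGradSq Avan u x + 4 * (C:ℝ) ^ 2 * ‖u x‖ ^ 2 := m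
      rw [Real.norm_eq_abs, stripDensity, abs_le]
      constructor <;> linarith
    · refine Eventually.of_forall fun x => ?_
      obtain ⟨N, hN⟩ := exists_nat_gt (|x.2|)
      refine tendsto_const_nhds.congr' ?_
      filter_upwards [eventually_ge_atTop N] with n hn
      apply stripDensity_congr
      have hx : |x.2| < (n:ℝ) + 1 := by
        have : (N:ℝ) ≤ n := by exact_mod_cast hn
        linarith
      have : ∀ᶠ y : ℝ × ℝ in 𝓝 x, |y.2| < (n:ℝ) + 1 :=
        (continuous_abs.comp continuous_snd).continuousAt.eventually_lt_const hx
      filter_upwards [this] with y hy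
      have : χ (c n * y.2) = 1 := by
        apply h1
        rw [abs_mul, abs_of_pos (cpos n)]
        simp only [c]
        rw [one_div, inv_mul_le_iff₀ (by positivity)]
        linarith
      simp [w, φ, this]
  obtain ⟨n, hn⟩ := (lim.eventually_lt_const (show Estrip L R u < Estrip L R u + ε by linarith)).exists
  refine ⟨w n, 2 * ((n:ℝ) + 1), hw n, fun x hx => ?_, fun x hx => ?_, hn.le⟩
  · simp [w, u5 x hx]
  · have : χ (c n * x.2) = 0 := by
      apply h0
      rw [abs_mul, abs_of_pos (cpos n)]
      simp only [c]
      rw [one_div, le_inv_mul_iff₀ (by positivity)]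
      linarith
    simp [w, φ, this]

lemma exists_trunc : ∃ (f : ℂ → ℂ) (C : NNReal), ContDiff ℝ 1 f ∧ LipschitzWith C f ∧
    (∀ z, ‖f z‖ ≤ ‖z‖) ∧ (∀ z, ‖z‖ ≤ 1 → f z = 0) ∧ (∀ z, 2 ≤ ‖z‖ → f z = z) := by
  let f : ℂ → ℂ := fun z => smoothTransition (‖z‖ ^ 2 - 1) • z
  have hd : ContDiff ℝ 1 f :=
    (smoothTransition.contDiff.comp ((contDiff_norm_sq ℝ).sub contDiff_const)).smul contDiff_id
  have h2 : ∀ z, 2 ≤ ‖z‖ → f z = z := by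
    intro z hz
    have : smoothTransition (‖z‖ ^ 2 - 1) = 1 := smoothTransition.one_of_one_le (by nlinarith)
    simp [f, this]
  have hd' : ContDiff ℝ 1 (fun z => f z - z) := hd.sub contDiff_id
  have hs : HasCompactSupport (fun z => f z - z) := by
    refine HasCompactSupport.intro (isCompact_closedBall (0:ℂ) 2) fun z hz => ?_
    have : 2 ≤ ‖z‖ := by
      rw [mem_closedBall_zero_iff, not_le] at hz; exact hz.le
    simp [h2 z this]
  obtain ⟨D, hD⟩ := ContDiff.lipschitzWith_of_hasCompactSupport hs hd' (by simp)
  have hl : LipschitzWith (D + 1) f := by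
    have := hD.add LipschitzWith.id
    simpa using this
  refine ⟨f, D + 1, hd, hl, fun z => ?_, fun z hz => ?_, h2⟩
  · simp only [f, norm_smul, Real.norm_eq_abs, abs_of_nonneg (smoothTransition.nonneg _)]
    exact mul_le_of_le_one_left (norm_nonneg _) (smoothTransition.le_one _)
  · have : smoothTransition (‖z‖ ^ 2 - 1) = 0 :=
      smoothTransition.zero_of_nonpos (by nlinarith [norm_nonneg z])
    simp [f, this]

lemma approx2 {L R T : ℝ} {u : ℝ × ℝ → ℂ} (hL : 0 < L) (u1 : ContDiff ℝ 1 u)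
    (u2 : ∀ x ∈ frontier (Strip R), u x = 0) (u3 : ∀ x, T ≤ |x.2| → u x = 0)
    {ε : ℝ} (hε : 0 < ε) :
    ∃ v, Good (-R/2) (R/2) v ∧ Estrip L R v ≤ Estrip L R u + ε := by
  obtain ⟨f, C, hd, hC, hb, h0, h1⟩ := exists_trunc
  have lpos : 0 < L ^ (-(2:ℝ)/3) := Real.rpow_pos_of_pos hL _
  let K : Set (ℝ × ℝ) := Icc (-R/2) (R/2) ×ˢ Icc (-T) T
  have Kc : IsCompact K := isCompact_Icc.prod isCompact_Icc
  have uz : ∀ x, T < |x.2| → u =ᶠ[𝓝 x] (fun _ => 0) := by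
    intro x hx
    have : ∀ᶠ y : ℝ × ℝ in 𝓝 x, T < |y.2| :=
      (continuous_abs.comp continuous_snd).continuousAt.eventually_const_lt hx
    filter_upwards [this] with y hy using u3 y hy.le
  let c : ℕ → ℝ := fun n => 1 / ((n:ℝ) + 1)
  have cpos : ∀ n, 0 < c n := fun n => by positivity
  let g : ℕ → ℂ → ℂ := fun n z => c n • f ((c n)⁻¹ • z)
  have gd : ∀ n, ContDiff ℝ 1 (g n) := fun n => (hd.comp (contDiff_id.const_smul _)).const_smul _
  have gl : ∀ n, LipschitzWith C (g n) := by
    intro n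
    refine LipschitzWith.of_dist_le_mul fun x y => ?_
    simp only [g]
    rw [dist_smul₀, Real.norm_eq_abs, abs_of_pos (cpos n)]
    have := hC.dist_le_mul ((c n)⁻¹ • x) ((c n)⁻¹ • y)
    rw [dist_smul₀, Real.norm_eq_abs, abs_of_pos (inv_pos.2 (cpos n))] at this
    calc _ ≤ c n * (C * ((c n)⁻¹ * dist x y)) := mul_le_mul_of_nonneg_left this (cpos n).le
      _ = C * dist x y := by have := (cpos n).ne'; field_simp
  have gb : ∀ n z, ‖g n z‖ ≤ ‖z‖ := by
    intro n z
    simp only [g, norm_smul, Real.norm_eq_abs, abs_of_pos (cpos n)]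
    have := hb ((c n)⁻¹ • z)
    rw [norm_smul, Real.norm_eq_abs, abs_of_pos (inv_pos.2 (cpos n))] at this
    calc _ ≤ c n * ((c n)⁻¹ * ‖z‖) := mul_le_mul_of_nonneg_left this (cpos n).le
      _ = ‖z‖ := by have := (cpos n).ne'; field_simp
  have g0 : ∀ n z, ‖z‖ ≤ c n → g n z = 0 := by
    intro n z hz
    have : f ((c n)⁻¹ • z) = 0 := by
      apply h0
      rw [norm_smul, Real.norm_eq_abs, abs_of_pos (inv_pos.2 (cpos n)), inv_mul_le_iff₀ (cpos n)]
      linarith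
    simp only [g, this, smul_zero]
  have g1 : ∀ n z, 2 * c n ≤ ‖z‖ → g n z = z := by
    intro n z hz
    have : f ((c n)⁻¹ • z) = (c n)⁻¹ • z := by
      apply h1
      rw [norm_smul, Real.norm_eq_abs, abs_of_pos (inv_pos.2 (cpos n)), le_inv_mul_iff₀ (cpos n)]
      linarith
    simp only [g, this]
    rw [smul_smul, mul_inv_cancel₀ (cpos n).ne', one_smul]
  let w : ℕ → ℝ × ℝ → ℂ := fun n x => g n (u x)
  have hw : ∀ n, ContDiff ℝ 1 (w n) := fun n => (gd n).comp u1
  have hnw : ∀ n x, ‖w n x‖ ≤ ‖u x‖ := fun n x => gb n _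
  have hfd : ∀ n x e, ‖e‖ ≤ 1 → ‖fderiv ℝ (w n) x e‖ ≤ C * ‖fderiv ℝ u x‖ := by
    intro n x e he
    have e1 : fderiv ℝ (w n) x = (fderiv ℝ (g n) (u x)).comp (fderiv ℝ u x) :=
      fderiv_comp x ((gd n).differentiable (by simp) _) (u1.differentiable (by simp) x)
    calc ‖fderiv ℝ (w n) x e‖ ≤ ‖fderiv ℝ (w n) x‖ * ‖e‖ := ContinuousLinearMap.le_opNorm _ _
      _ ≤ ‖fderiv ℝ (w n) x‖ * 1 := mul_le_mul_of_nonneg_left he (norm_nonneg _)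
      _ ≤ ‖fderiv ℝ (g n) (u x)‖ * ‖fderiv ℝ u x‖ := by
          rw [mul_one, e1]; exact ContinuousLinearMap.opNorm_comp_le _ _
      _ ≤ C * ‖fderiv ℝ u x‖ :=
          mul_le_mul_of_nonneg_right (norm_fderiv_le_of_lipschitz ℝ (gl n)) (norm_nonneg _)
  let G : ℝ × ℝ → ℝ := fun x => (C * ‖fderiv ℝ u x‖ + ‖((Avan x).1 : ℂ)‖ * ‖u x‖) ^ 2 +
    (C * ‖fderiv ℝ u x‖) ^ 2 + L ^ (-(2:ℝ)/3) * ‖u x‖ ^ 2 + L ^ (-(2:ℝ)/3) / 2 * ‖u x‖ ^ 4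
  have Gc : Continuous G := by
    have := continuous_Avan1
    have h2 := u1.continuous_fderiv (by simp)
    have h3 := u1.continuous
    fun_prop
  have Gi : IntegrableOn G (Strip R) := by
    have hi : IntegrableOn G K := Gc.continuousOn.integrableOn_compact Kc
    refine IntegrableOn.of_forall_diff_eq_zero hi (isOpen_Strip R).measurableSet fun x hx => ?_
    have hx2 : T < |x.2| := by
      by_contra hcon
      exact hx.2 ⟨Ioo_subset_Icc_self hx.1.1, abs_le.1 (not_lt.1 hcon)⟩
    have e := uz x hx2
    have e1 := e.fderiv_eq (𝕜 := ℝ)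
    have e2 := e.eq_of_nhds
    simp [G, e1, e2]
  let D : ℝ × ℝ → ℝ := fun x => if u x = 0 then 0 else stripDensity L u x
  have Gbound : ∀ (v : ℝ × ℝ → ℂ) x, ‖v x‖ ≤ ‖u x‖ →
      (∀ e : ℝ × ℝ, ‖e‖ ≤ 1 → ‖fderiv ℝ v x e‖ ≤ C * ‖fderiv ℝ u x‖) →
      ‖stripDensity L v x‖ ≤ G x := by
    intro v x hv hv'
    have a1 : ‖fderiv ℝ v x (1,0) - Complex.I * ((Avan x).1 : ℂ) * v x‖ ≤
        C * ‖fderiv ℝ u x‖ + ‖((Avan x).1 : ℂ)‖ * ‖u x‖ := by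
      refine (norm_sub_le _ _).trans (add_le_add (hv' _ (by simp [Prod.norm_def])) ?_)
      rw [norm_mul, norm_mul, Complex.norm_I, one_mul]
      exact mul_le_mul_of_nonneg_left hv (norm_nonneg _)
    have a2 : ‖fderiv ℝ v x (0,1) - Complex.I * ((Avan x).2 : ℂ) * v x‖ ≤
        C * ‖fderiv ℝ u x‖ := by
      have : (Avan x).2 = 0 := rfl
      rw [this]
      simpa using hv' (0,1) (by simp [Prod.norm_def])
    have b1 := pow_le_pow_left₀ (norm_nonneg _) a1 2
    have b2 := pow_le_pow_left₀ (norm_nonneg _) a2 2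
    have m0 : 0 ≤ magGradSq Avan v x := by unfold magGradSq; positivity
    have m : magGradSq Avan v x ≤ (C * ‖fderiv ℝ u x‖ + ‖((Avan x).1 : ℂ)‖ * ‖u x‖) ^ 2 +
      (C * ‖fderiv ℝ u x‖) ^ 2 := add_le_add b1 b2
    have p2 := mul_le_mul_of_nonneg_left
      (pow_le_pow_left₀ (norm_nonneg _) hv 2) lpos.le
    have p4 := mul_le_mul_of_nonneg_left
      (pow_le_pow_left₀ (norm_nonneg _) hv 4) (half_pos lpos).le
    have q2 : 0 ≤ L ^ (-(2:ℝ)/3) * ‖v x‖ ^ 2 := by positivity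
    have q4 : 0 ≤ L ^ (-(2:ℝ)/3) / 2 * ‖v x‖ ^ 4 := by positivity
    rw [Real.norm_eq_abs, stripDensity, abs_le]
    simp only [G]
    constructor <;> linarith
  have ptw : ∀ x, Tendsto (fun n => stripDensity L (w n) x) atTop (𝓝 (D x)) := by
    intro x
    refine tendsto_const_nhds.congr' ?_
    by_cases hx : u x = 0
    · refine Eventually.of_forall fun n => ?_
      simp only [D, hx, if_true]
      rw [← stripDensity_zero L x]
      apply stripDensity_congr
      have : ∀ᶠ y in 𝓝 x, ‖u y‖ < c n :=
        u1.continuous.norm.continuousAt.eventually_lt_const (by simpa [hx] using cpos n)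
      filter_upwards [this] with y hy using (g0 n _ hy.le).symm
    · simp only [D, hx, if_false]
      have hc : Tendsto (fun n => 2 * c n) atTop (𝓝 0) := by
        have h2 := (tendsto_one_div_add_atTop_nhds_zero_nat (𝕜 := ℝ)).const_mul 2
        rw [mul_zero] at h2
        exact h2
      filter_upwards [hc.eventually_lt_const (norm_pos_iff.2 hx)] with n hn
      apply stripDensity_congr
      have : ∀ᶠ y in 𝓝 x, 2 * c n < ‖u y‖ :=
        u1.continuous.norm.continuousAt.eventually_const_lt hn
      filter_upwards [this] with y hy using (g1 n _ hy.le).symm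
  have lim : Tendsto (fun n => Estrip L R (w n)) atTop (𝓝 (∫ x in Strip R, D x)) := by
    refine tendsto_integral_of_dominated_convergence G ?_ Gi ?_ ?_
    · exact fun n => (continuous_stripDensity L (hw n)).aestronglyMeasurable
    · exact fun n => Eventually.of_forall fun x => Gbound _ x (hnw n x) (hfd n x)
    · exact Eventually.of_forall ptw
  have Dmeas : AEStronglyMeasurable D (volume.restrict (Strip R)) :=
    aestronglyMeasurable_of_tendsto_ae atTop
      (fun n => (continuous_stripDensity L (hw n)).aestronglyMeasurable)
      (Eventually.of_forall ptw)
  have Di : IntegrableOn D (Strip R) := by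
    refine Integrable.mono' Gi Dmeas (Eventually.of_forall fun x => ?_)
    exact le_of_tendsto (ptw x).norm (Eventually.of_forall fun n => Gbound _ x (hnw n x) (hfd n x))
  have ui : IntegrableOn (stripDensity L u) (Strip R) := by
    have hi : IntegrableOn (stripDensity L u) K :=
      (continuous_stripDensity L u1).continuousOn.integrableOn_compact Kc
    refine IntegrableOn.of_forall_diff_eq_zero hi (isOpen_Strip R).measurableSet fun x hx => ?_
    have hx2 : T < |x.2| := by
      by_contra hcon
      exact hx.2 ⟨Ioo_subset_Icc_self hx.1.1, abs_le.1 (not_lt.1 hcon)⟩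
    rw [stripDensity_congr L (uz x hx2), stripDensity_zero]
  have Dle : ∫ x in Strip R, D x ≤ Estrip L R u := by
    refine integral_mono Di ui fun x => ?_
    by_cases hx : u x = 0
    · simp only [D, hx, if_true, stripDensity]
      have m0 : 0 ≤ magGradSq Avan u x := by unfold magGradSq; positivity
      simpa using m0
    · simp [D, hx]
  obtain ⟨n, hn⟩ := (lim.eventually_lt_const
    (show ∫ x in Strip R, D x < Estrip L R u + ε by linarith)).exists
  -- cut to the strip
  let v : ℝ × ℝ → ℂ := (Strip R).indicator (w n)
  let F : Set (ℝ × ℝ) := closure (Strip R) ∩ {x | c n ≤ ‖u x‖}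
  have Fcl : IsClosed F := isClosed_closure.inter (isClosed_le continuous_const u1.continuous.norm)
  have vsupp : tsupport v ⊆ F := by
    refine closure_minimal (fun x hx => ?_) Fcl
    have hxs : x ∈ Strip R := by
      by_contra hcon
      exact hx (indicator_of_notMem hcon _)
    refine ⟨subset_closure hxs, ?_⟩
    by_contra hcon
    apply hx
    simp only [v, indicator_of_mem hxs]
    exact g0 n _ (not_le.1 hcon).le
  have Fs : F ⊆ Strip R := by
    intro x hx
    by_contra hcon
    have hf : x ∈ frontier (Strip R) := by
      rw [(isOpen_Strip R).frontier_eq]; exact ⟨hx.1, hcon⟩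
    have h3 := hx.2
    simp only [mem_setOf_eq, u2 x hf, norm_zero] at h3
    exact absurd h3 (not_le.2 (cpos n))
  have veq : ∀ x ∈ Strip R, v =ᶠ[𝓝 x] w n := by
    intro x hx
    filter_upwards [(isOpen_Strip R).mem_nhds hx] with y hy
    exact indicator_of_mem hy _
  have FK : F ⊆ K := by
    intro x hx
    refine ⟨Ioo_subset_Icc_self (Fs hx).1, ?_⟩
    apply abs_le.1
    by_contra hcon
    have h3 := hx.2
    simp only [mem_setOf_eq, u3 x (not_le.1 hcon).le, norm_zero] at h3
    exact absurd h3 (not_le.2 (cpos n))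
  refine ⟨v, ⟨?_, ?_, vsupp.trans Fs⟩, ?_⟩
  · rw [contDiff_iff_contDiffAt]
    intro x
    by_cases hx : x ∈ tsupport v
    · exact (hw n).contDiffAt.congr_of_eventuallyEq (veq x (Fs (vsupp hx)))
    · exact contDiffAt_const.congr_of_eventuallyEq (notMem_tsupport_iff_eventuallyEq.1 hx)
  · exact HasCompactSupport.of_support_subset_isCompact Kc
      ((subset_tsupport v).trans (vsupp.trans FK))
  · have : Estrip L R v = Estrip L R (w n) :=
      setIntegral_congr_fun (isOpen_Strip R).measurableSet
        fun x hx => stripDensity_congr L (veq x hx)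
    rw [this]; exact hn.le

lemma approx {L R : ℝ} {u : ℝ × ℝ → ℂ} (hL : 0 < L) (hu : MemH1mag0 R u) {ε : ℝ} (hε : 0 < ε) :
    ∃ v, Good (-R/2) (R/2) v ∧ Jfull L v ≤ Estrip L R u + ε := by
  obtain ⟨u', T, a1, a2, a3, a4⟩ := approx1 hL hu (half_pos hε)
  obtain ⟨v, b1, b2⟩ := approx2 hL a1 a2 a3 (half_pos hε)
  exact ⟨v, b1, by rw [← b1.Estrip_eq L]; linarith⟩

lemma bddBelow_Estrip {L : ℝ} (hL : 0 < L) (R : ℝ) :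
    BddBelow (Estrip L R '' {u | MemH1mag0 R u}) := by
  obtain ⟨C, hC⟩ := lower_bound hL (-R/2) (R/2)
  refine ⟨C - 1, ?_⟩
  rintro _ ⟨u, hu, rfl⟩
  obtain ⟨v, h1, h2⟩ := approx hL hu one_pos
  linarith [hC v h1]


/-- `E(L) ≤ e_gs(L;R)/R` for all `L > 0`, `R > 0`. -/
theorem E_le_egs_div (E : ℝ → ℝ) (hE : IsLimitE E) :
    ∀ L : ℝ, 0 < L → ∀ R : ℝ, 0 < R → E L ≤ egs L R / R := by
  intro L hL R hR
  rw [le_div_iff₀ hR]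
  have hzero : MemH1mag0 R (fun _ => 0) := by
    apply Good.mem
    refine ⟨contDiff_const, HasCompactSupport.zero, ?_⟩
    have : tsupport (fun _ : ℝ × ℝ => (0:ℂ)) = ∅ := by
      rw [tsupport_eq_empty_iff]; rfl
    rw [this]; exact empty_subset _
  refine le_csInf ⟨_, ⟨_, hzero, rfl⟩⟩ ?_
  rintro _ ⟨u, hu, rfl⟩
  refine le_of_forall_pos_le_add fun ε hε => ?_
  obtain ⟨v, hv, hJ⟩ := approx hL hu hε
  refine le_trans ?_ hJ
  rw [← le_div_iff₀ hR]
  have ht : Tendsto (fun n : ℕ => (n : ℝ) * R) atTop atTop :=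
    tendsto_natCast_atTop_atTop.atTop_mul_const hR
  refine le_of_tendsto ((hE L hL).comp ht) ?_
  filter_upwards [eventually_gt_atTop 0] with n hn
  have hn' : (0:ℝ) < n := by exact_mod_cast hn
  have hv' : Good (-R/2) (-R/2 + R) v := by
    convert hv using 1; ring
  obtain ⟨w, hw, hJw⟩ := glue (L := L) hR hv' n
  obtain ⟨t1, t2⟩ := hw.translate (R/2 - n * R / 2) L
  have t1' : Good (-(n * R)/2) ((n * R)/2) (fun x => w (x - (R/2 - n * R / 2, 0))) := by
    convert t1 using 1 <;> ring
  have hle : egs L (n * R) ≤ n * Jfull L v := by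
    rw [← hJw, ← t2, ← t1'.Estrip_eq L]
    exact csInf_le (bddBelow_Estrip hL _) ⟨_, t1'.mem, rfl⟩
  simp only [Function.comp]
  rw [div_le_div_iff₀ (by positivity) hR]
  nlinarith

end
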